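/- arXiv:math/0607685 — 2 statements merged into one kernel-verified Lean document; each statement's English description precedes it below -/
import Mathlib

section
/- Let u : ℝ^m → ℂ be continuously differentiable, let x ∈ ℝ^m, and let ε > 0. Then |u(x)|² ≤ 2|u(φ(ε, x))|² + 2ε ∫_0^ε |(Du)(φ(t, x))[Z(φ(t, x))]|² dt, where (Du)(y)[v] denotes the Fréchet derivative of u at y applied to the vector v. (This is the pointwise transport estimate: the value of u at x is controlled by its value at the endpoint of the flow line together with the derivative of u along the flow line.) -/
open MeasureTheory

/-- Pointwise transport estimate: for a `C¹` function `u` and a flow `φ` of a `C¹` vector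
field `Z` on `ℝ^m`, the value of `|u|²` at `x` is controlled by its value at the endpoint
`φ ε x` of the flow line together with the derivative of `u` along the flow line. -/
theorem pointwise_transport_estimate
    (m : ℕ) (hm : 1 ≤ m)
    (Z : (Fin m → ℝ) → (Fin m → ℝ)) (hZ : ContDiff ℝ 1 Z)
    (φ : ℝ → (Fin m → ℝ) → (Fin m → ℝ))
    (hφ0 : ∀ x, φ 0 x = x)
    (hφ : ∀ (t : ℝ) (x : Fin m → ℝ), HasDerivAt (fun s => φ s x) (Z (φ t x)) t)
    (u : (Fin m → ℝ) → ℂ) (hu : ContDiff ℝ 1 u)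
    (x : Fin m → ℝ) (ε : ℝ) (hε : 0 < ε) :
    ‖u x‖ ^ 2 ≤
      2 * ‖u (φ ε x)‖ ^ 2 +
        2 * ε * ∫ t in (0:ℝ)..ε, ‖fderiv ℝ u (φ t x) (Z (φ t x))‖ ^ 2 := by
  have hc : Continuous fun t => φ t x :=
    continuous_iff_continuousAt.2 fun t => (hφ t x).continuousAt
  have hg : Continuous fun t => fderiv ℝ u (φ t x) (Z (φ t x)) :=
    ((hu.continuous_fderiv (by norm_num)).comp hc).clm_apply (hZ.continuous.comp hc)
  have hd : ∀ t, HasDerivAt (fun s => u (φ s x)) (fderiv ℝ u (φ t x) (Z (φ t x))) t := fun t =>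
    ((hu.differentiable (by norm_num)) (φ t x)).hasFDerivAt.comp_hasDerivAt t (hφ t x)
  have hftc := intervalIntegral.integral_eq_sub_of_hasDerivAt (a := 0) (b := ε)
    (fun t _ => hd t) (hg.intervalIntegrable _ _)
  have hle := intervalIntegral.norm_integral_le_integral_norm (μ := volume)
    (f := fun t => fderiv ℝ u (φ t x) (Z (φ t x))) hε.le
  rw [hftc, hφ0] at hle
  generalize hG : (fun t => ‖fderiv ℝ u (φ t x) (Z (φ t x))‖) = G
  have hGc : Continuous G := hG ▸ hg.norm
  have e1 : ∀ t, ‖fderiv ℝ u (φ t x) (Z (φ t x))‖ = G t := fun t => congrFun hG t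
  simp only [e1] at hle ⊢
  generalize hA : (∫ t in (0:ℝ)..ε, G t) = A at hle
  have h0 : 0 ≤ ∫ t in (0:ℝ)..ε, (ε * G t - A) ^ 2 :=
    intervalIntegral.integral_nonneg hε.le fun t _ => sq_nonneg _
  have h1 : (∫ t in (0:ℝ)..ε, (ε * G t - A) ^ 2)
      = ε ^ 2 * (∫ t in (0:ℝ)..ε, G t ^ 2) - 2 * ε * A * A + ε * A ^ 2 := by
    have : ∀ t, (ε * G t - A) ^ 2 = ε ^ 2 * G t ^ 2 - 2 * ε * A * G t + A ^ 2 := fun t => by ring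
    simp only [this]
    rw [intervalIntegral.integral_add, intervalIntegral.integral_sub,
      intervalIntegral.integral_const_mul, intervalIntegral.integral_const_mul, hA,
      intervalIntegral.integral_const]
    · simp
    all_goals exact Continuous.intervalIntegrable (by fun_prop) _ _
  generalize (∫ t in (0:ℝ)..ε, G t ^ 2) = B at h1 ⊢
  have h2 : A ^ 2 ≤ ε * B := by
    have : 0 ≤ ε * (ε * B - A ^ 2) := by linarith
    have := nonneg_of_mul_nonneg_right this hε
    linarith
  have h3 : ‖u x‖ ≤ ‖u (φ ε x)‖ + A := by
    have := norm_sub_norm_le (u x) (u (φ ε x))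
    rw [norm_sub_rev] at this
    linarith
  have h4 : ‖u x‖ ^ 2 ≤ (‖u (φ ε x)‖ + A) ^ 2 := by gcongr
  nlinarith [sq_nonneg (‖u (φ ε x)‖ - A)]
end

section
/- Assume in addition that Z is globally Lipschitz and that |div Z(x)| ≤ C₁ for all x ∈ ℝ^m, where div Z(x) is the trace of the Fréchet derivative of Z at x. Then for every measurable set A ⊆ ℝ^m, every t ≥ 0, and every measurable u : ℝ^m → ℂ, ∫_A |u(φ(t, x))|² dx ≤ e^{C₁ t} ∫_{φ(t,·)(A)} |u(y)|² dy. (Change of variables along the flow with Jacobian controlled by the divergence bound.) -/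
open MeasureTheory

section Helpers

open Filter Topology Set

lemma clm_det_eq {m : ℕ} (L : (Fin m → ℝ) →L[ℝ] (Fin m → ℝ)) :
    L.det = Matrix.det (LinearMap.toMatrix' (L : (Fin m → ℝ) →ₗ[ℝ] (Fin m → ℝ))) := by
  rw [LinearMap.det_toMatrix']

lemma clm_det_differentiable (m : ℕ) :
    Differentiable ℝ (fun L : (Fin m → ℝ) →L[ℝ] (Fin m → ℝ) => L.det) := by
  have : (fun L : (Fin m → ℝ) →L[ℝ] (Fin m → ℝ) => L.det) = fun L =>
      ∑ σ : Equiv.Perm (Fin m), ((Equiv.Perm.sign σ : ℤ) : ℝ) *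
        ∏ i, L (Pi.single i 1) (σ i) := by
    funext L
    rw [clm_det_eq, Matrix.det_apply']
    simp [LinearMap.toMatrix'_apply]
  rw [this]
  have h1 : ∀ i j : Fin m, Differentiable ℝ
      (fun L : (Fin m → ℝ) →L[ℝ] (Fin m → ℝ) => L (Pi.single i 1) j) := by
    intro i j
    exact ((ContinuousLinearMap.proj (R := ℝ) (φ := fun _ : Fin m => ℝ) j).comp
      (ContinuousLinearMap.apply ℝ (Fin m → ℝ) (Pi.single i (1 : ℝ) : Fin m → ℝ))).differentiable
  fun_prop

lemma clm_det_line {m : ℕ} (M : (Fin m → ℝ) →L[ℝ] (Fin m → ℝ)) :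
    HasDerivAt (fun r : ℝ => (1 + r • M).det)
      (LinearMap.trace ℝ _ (M : (Fin m → ℝ) →ₗ[ℝ] (Fin m → ℝ))) 0 := by
  set A := LinearMap.toMatrix' (M : (Fin m → ℝ) →ₗ[ℝ] (Fin m → ℝ)) with hA
  set P := (Matrix.det (1 + (Polynomial.X : Polynomial ℝ) • A.map Polynomial.C)).divX.divX
  have hf : (fun r : ℝ => (1 + r • M).det) = fun r => 1 + A.trace * r + P.eval r * r ^ 2 := by
    funext r
    rw [clm_det_eq, ← Matrix.det_one_add_smul]
    congr 1
    ext i j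
    simp [hA, LinearMap.toMatrix'_apply, Matrix.one_apply, Pi.single_apply]
  have ht : LinearMap.trace ℝ _ (M : (Fin m → ℝ) →ₗ[ℝ] (Fin m → ℝ)) = A.trace := by
    rw [← Matrix.trace_toLin'_eq, hA, Matrix.toLin'_toMatrix']
  rw [hf, ht]
  have h := (((hasDerivAt_id (0 : ℝ)).const_mul A.trace).const_add 1).add
    ((P.hasDerivAt 0).mul ((hasDerivAt_id (0 : ℝ)).pow 2))
  refine (h.congr_deriv ?_)
  simp

lemma clm_det_lower (m : ℕ) (ε : ℝ) (hε : 0 < ε) : ∃ δ > 0,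
    ∀ N : (Fin m → ℝ) →L[ℝ] (Fin m → ℝ), ‖N‖ < δ →
      1 + LinearMap.trace ℝ _ (N : (Fin m → ℝ) →ₗ[ℝ] (Fin m → ℝ)) - ε * ‖N‖ ≤ (1 + N).det := by
  set D := fderiv ℝ (fun L : (Fin m → ℝ) →L[ℝ] (Fin m → ℝ) => L.det) 1
  have hD : HasFDerivAt (fun L : (Fin m → ℝ) →L[ℝ] (Fin m → ℝ) => L.det) D 1 :=
    (clm_det_differentiable m 1).hasFDerivAt
  have hDt : ∀ N : (Fin m → ℝ) →L[ℝ] (Fin m → ℝ),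
      D N = LinearMap.trace ℝ _ (N : (Fin m → ℝ) →ₗ[ℝ] (Fin m → ℝ)) := by
    intro N
    have h1 : HasDerivAt (fun r : ℝ => 1 + r • N) N 0 := by
      simpa using ((hasDerivAt_id (0 : ℝ)).smul_const N).const_add 1
    have h2 : HasDerivAt (fun r : ℝ => (1 + r • N).det) (D N) 0 := by
      have hD' : HasFDerivAt (fun L : (Fin m → ℝ) →L[ℝ] (Fin m → ℝ) => L.det) D
        (1 + (0 : ℝ) • N) := by simpa using hD
      exact hD'.comp_hasDerivAt (0 : ℝ) h1
    exact h2.unique (clm_det_line N)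
  have h := hasFDerivAt_iff_isLittleO_nhds_zero.1 hD
  have h' := h.def hε
  obtain ⟨δ, hδ, hb⟩ := Metric.eventually_nhds_iff.1 h'
  refine ⟨δ, hδ, fun N hN => ?_⟩
  have := hb (y := N) (by simpa using hN)
  rw [hDt, Real.norm_eq_abs] at this
  have h3 := (abs_le.1 this).1
  have h4 : (1 : (Fin m → ℝ) →L[ℝ] (Fin m → ℝ)).det = 1 := by
    rw [ContinuousLinearMap.det]; exact LinearMap.det_id
  rw [h4] at h3
  linarith

/-- One Euler step. -/
def eulerStep {m : ℕ} (Z : (Fin m → ℝ) → (Fin m → ℝ)) (h : ℝ) (x : Fin m → ℝ) : Fin m → ℝ :=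
  x + h • Z x

lemma eulerStep_continuous {m : ℕ} {Z : (Fin m → ℝ) → (Fin m → ℝ)} (hZ : Continuous Z) (h : ℝ) :
    Continuous (eulerStep Z h) := by
  unfold eulerStep; fun_prop

lemma eulerStep_injective {m : ℕ} {Z : (Fin m → ℝ) → (Fin m → ℝ)} {K : NNReal}
    (hZ : LipschitzWith K Z) {h : ℝ} (h0 : 0 ≤ h) (hK : h * K < 1) :
    Function.Injective (eulerStep Z h) := by
  intro x y hxy
  have e : x - y = h • (Z y - Z x) := by
    unfold eulerStep at hxy
    rw [smul_sub, sub_eq_sub_iff_add_eq_add, hxy]; abel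
  have h1 : ‖x - y‖ ≤ h * K * ‖x - y‖ := by
    calc ‖x - y‖ = h * ‖Z y - Z x‖ := by rw [e, norm_smul, Real.norm_of_nonneg h0]
      _ ≤ h * (K * ‖y - x‖) := by gcongr; exact hZ.norm_sub_le y x
      _ = _ := by rw [norm_sub_rev]; ring
  have h2 : ‖x - y‖ = 0 := by
    have := norm_nonneg (x - y); nlinarith
  exact sub_eq_zero.1 (norm_eq_zero.1 h2)

lemma eulerStep_measure {m : ℕ} {Z : (Fin m → ℝ) → (Fin m → ℝ)} {K : NNReal}
    (hZ : ContDiff ℝ 1 Z) (hL : LipschitzWith K Z) {h : ℝ} (h0 : 0 ≤ h) (hK : h * K < 1)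
    {c : ℝ} (hc : ∀ x, c ≤ (1 + h • fderiv ℝ Z x).det)
    {B : Set (Fin m → ℝ)} (hB : MeasurableSet B) :
    ENNReal.ofReal c * volume (eulerStep Z h ⁻¹' B) ≤ volume B := by
  have hm : MeasurableSet (eulerStep Z h ⁻¹' B) :=
    (eulerStep_continuous hZ.continuous h).measurable hB
  have hd : ∀ x ∈ eulerStep Z h ⁻¹' B,
      HasFDerivWithinAt (eulerStep Z h) (1 + h • fderiv ℝ Z x) (eulerStep Z h ⁻¹' B) x := by
    intro x _
    have : HasFDerivAt Z (fderiv ℝ Z x) x := (hZ.differentiable (by simp) x).hasFDerivAt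
    exact ((hasFDerivAt_id x).add (this.const_smul h)).hasFDerivWithinAt
  have := lintegral_abs_det_fderiv_eq_addHaar_image volume hm hd
    (eulerStep_injective hL h0 hK).injOn
  calc ENNReal.ofReal c * volume (eulerStep Z h ⁻¹' B)
      = ∫⁻ x in eulerStep Z h ⁻¹' B, ENNReal.ofReal c := by simp
    _ ≤ ∫⁻ x in eulerStep Z h ⁻¹' B, ENNReal.ofReal |(1 + h • fderiv ℝ Z x).det| := by
        gcongr with x
        exact (hc x).trans (le_abs_self _)
    _ = volume (eulerStep Z h '' (eulerStep Z h ⁻¹' B)) := this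
    _ ≤ volume B := measure_mono (image_preimage_subset _ _)

lemma eulerStep_iterate_measure {m : ℕ} {Z : (Fin m → ℝ) → (Fin m → ℝ)} {K : NNReal}
    (hZ : ContDiff ℝ 1 Z) (hL : LipschitzWith K Z) {h : ℝ} (h0 : 0 ≤ h) (hK : h * K < 1)
    {c : ℝ} (hc : ∀ x, c ≤ (1 + h • fderiv ℝ Z x).det) (n : ℕ)
    {B : Set (Fin m → ℝ)} (hB : MeasurableSet B) :
    ENNReal.ofReal c ^ n * volume ((eulerStep Z h)^[n] ⁻¹' B) ≤ volume B := by
  induction n generalizing B with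
  | zero => simp
  | succ k ih =>
    have hm : MeasurableSet (eulerStep Z h ⁻¹' B) :=
      (eulerStep_continuous hZ.continuous h).measurable hB
    rw [Function.iterate_succ', preimage_comp, pow_succ', mul_assoc]
    calc _ ≤ ENNReal.ofReal c * volume (eulerStep Z h ⁻¹' B) := by gcongr; exact ih hm
      _ ≤ _ := eulerStep_measure hZ hL h0 hK hc hB

lemma euler_local_error {m : ℕ} {Z : (Fin m → ℝ) → (Fin m → ℝ)} {K : NNReal}
    (hL : LipschitzWith K Z) {y : ℝ → (Fin m → ℝ)} (hy : ∀ s, HasDerivAt y (Z (y s)) s)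
    {t M : ℝ} (hM : ∀ s ∈ Icc 0 t, ‖Z (y s)‖ ≤ M) {s h : ℝ} (hs : 0 ≤ s) (hh : 0 ≤ h)
    (hst : s + h ≤ t) : ‖y (s + h) - eulerStep Z h (y s)‖ ≤ K * M * h ^ 2 := by
  have hM0 : 0 ≤ M := (norm_nonneg _).trans (hM s ⟨hs, by linarith⟩)
  have h1 : ∀ r ∈ Icc s (s + h), ‖y r - y s‖ ≤ M * (r - s) :=
    norm_image_sub_le_of_norm_deriv_le_segment' (fun r _ => (hy r).hasDerivWithinAt)
      (fun r hr => hM r ⟨hs.trans hr.1, hr.2.le.trans hst⟩)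
  have h2 := norm_image_sub_le_of_norm_deriv_le_segment' (a := s) (b := s + h)
    (f := fun r => y r - (r - s) • Z (y s)) (f' := fun r => Z (y r) - Z (y s)) (C := K * (M * h))
    (fun r _ => by
      have := ((hasDerivAt_id r).sub_const s).smul_const (Z (y s))
      rw [one_smul] at this
      exact ((hy r).sub this).hasDerivWithinAt)
    (fun r hr => by
      refine (hL.norm_sub_le _ _).trans ?_
      gcongr
      refine (h1 r ⟨hr.1, hr.2.le⟩).trans ?_
      gcongr
      linarith [hr.2]) (s + h) ⟨by linarith, le_rfl⟩
  have e : y (s + h) - eulerStep Z h (y s) =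
      (y (s + h) - (s + h - s) • Z (y s)) - (y s - (s - s) • Z (y s)) := by
    simp [eulerStep]; abel
  rw [e]
  refine h2.trans (le_of_eq ?_)
  ring

lemma euler_global_error {m : ℕ} {Z : (Fin m → ℝ) → (Fin m → ℝ)} {K : NNReal}
    (hL : LipschitzWith K Z) {y : ℝ → (Fin m → ℝ)} (hy : ∀ s, HasDerivAt y (Z (y s)) s)
    {t M : ℝ} (hM : ∀ s ∈ Icc 0 t, ‖Z (y s)‖ ≤ M) {h : ℝ} (hh : 0 ≤ h) (hM0 : 0 ≤ M)
    (k : ℕ) (hk : k * h ≤ t) :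
    ‖y (k * h) - (eulerStep Z h)^[k] (y 0)‖ ≤ k * (K * M * h ^ 2) * Real.exp (K * (k * h)) := by
  induction k with
  | zero => simp
  | succ k ih =>
    push_cast at hk ⊢
    have hk' : k * h ≤ t := by linarith
    have ih := ih hk'
    have hl := euler_local_error hL hy hM (s := k * h) (h := h) (by positivity) hh (by linarith)
    rw [Function.iterate_succ_apply']
    set z := (eulerStep Z h)^[k] (y 0)
    have hs : ‖eulerStep Z h (y (k * h)) - eulerStep Z h z‖ ≤ (1 + K * h) * ‖y (k * h) - z‖ := by
      have e : eulerStep Z h (y (k * h)) - eulerStep Z h z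
        = (y (k * h) - z) + h • (Z (y (k * h)) - Z z) := by
        simp [eulerStep, smul_sub]; abel
      rw [e]
      refine (norm_add_le _ _).trans ?_
      rw [norm_smul, Real.norm_of_nonneg hh]
      have := mul_le_mul_of_nonneg_left (hL.norm_sub_le (y (k * h)) z) hh
      linarith
    have e1 : (1 + K * h) ≤ Real.exp (K * h) := by linarith [Real.add_one_le_exp (K * h)]
    have e2 : (1 : ℝ) ≤ Real.exp (K * ((k + 1) * h)) := Real.one_le_exp (by positivity)
    have e3 : Real.exp (K * ((k + 1) * h)) = Real.exp (K * h) * Real.exp (K * (k * h)) := by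
      rw [← Real.exp_add]; ring_nf
    have hQ : 0 ≤ K * M * h ^ 2 := by positivity
    calc ‖y ((k + 1) * h) - eulerStep Z h z‖
        = ‖(y (k * h + h) - eulerStep Z h (y (k * h)))
          + (eulerStep Z h (y (k * h)) - eulerStep Z h z)‖ := by
          congr 1; rw [add_mul, one_mul]; abel
      _ ≤ K * M * h ^ 2 + (1 + K * h) * ‖y (k * h) - z‖ :=
          (norm_add_le _ _).trans (add_le_add hl hs)
      _ ≤ K * M * h ^ 2 * Real.exp (K * ((k + 1) * h)) +
          Real.exp (K * h) * (k * (K * M * h ^ 2) * Real.exp (K * (k * h))) := by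
          refine add_le_add (le_mul_of_one_le_right hQ e2) ?_
          gcongr
      _ = _ := by rw [e3]; ring

lemma euler_tendsto {m : ℕ} {Z : (Fin m → ℝ) → (Fin m → ℝ)} {K : NNReal}
    (hL : LipschitzWith K Z) {y : ℝ → (Fin m → ℝ)} (hy : ∀ s, HasDerivAt y (Z (y s)) s)
    {t : ℝ} (ht : 0 ≤ t) :
    Tendsto (fun n : ℕ => (eulerStep Z (t / n))^[n] (y 0)) atTop (𝓝 (y t)) := by
  have hyc : Continuous y := continuous_iff_continuousAt.2 fun s => (hy s).continuousAt
  obtain ⟨M, hM⟩ := (isCompact_Icc (a := (0 : ℝ)) (b := t)).exists_bound_of_continuousOn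
    (hL.continuous.comp hyc).continuousOn
  have hM0 : 0 ≤ M := (norm_nonneg _).trans (hM 0 ⟨le_rfl, ht⟩)
  rw [tendsto_iff_norm_sub_tendsto_zero]
  have hlim : Tendsto (fun n : ℕ => K * M * t ^ 2 * Real.exp (K * t) / n) atTop (𝓝 0) :=
    tendsto_const_div_atTop_nhds_zero_nat _
  refine tendsto_of_tendsto_of_tendsto_of_le_of_le' tendsto_const_nhds hlim
    (Eventually.of_forall fun n => norm_nonneg _) ?_
  filter_upwards [eventually_gt_atTop 0] with n hn
  have hn' : (0 : ℝ) < n := by exact_mod_cast hn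
  have e : (n : ℝ) * (t / n) = t := by field_simp
  have := euler_global_error hL hy hM (h := t / n) (by positivity) hM0 n e.le
  rw [e] at this
  rw [norm_sub_rev]
  refine this.trans (le_of_eq ?_)
  field_simp

lemma flow_key {m : ℕ} {Z : (Fin m → ℝ) → (Fin m → ℝ)} {K : NNReal}
    (hZ : ContDiff ℝ 1 Z) (hL : LipschitzWith K Z)
    {φ : ℝ → (Fin m → ℝ) → (Fin m → ℝ)} (hφ0 : ∀ x, φ 0 x = x)
    (hφ : ∀ (t : ℝ) (x : Fin m → ℝ), HasDerivAt (fun s => φ s x) (Z (φ t x)) t) {C : ℝ}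
    (hdiv : ∀ x, |LinearMap.trace ℝ (Fin m → ℝ)
      (fderiv ℝ Z x : (Fin m → ℝ) →ₗ[ℝ] (Fin m → ℝ))| ≤ C) {t : ℝ} (ht : 0 ≤ t) :
    Measurable (φ t) ∧ Measure.map (φ t) volume ≤ ENNReal.ofReal (Real.exp (C * t)) • volume := by
  have hlim : ∀ x, Tendsto (fun n : ℕ => (eulerStep Z (t / n))^[n] x) atTop (𝓝 (φ t x)) := by
    intro x
    have := euler_tendsto hL (y := fun s => φ s x) (fun s => hφ s x) ht
    simpa only [hφ0] using this
  have hEm : ∀ n : ℕ, Measurable ((eulerStep Z (t / n))^[n]) := fun n =>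
    ((eulerStep_continuous hZ.continuous _).iterate n).measurable
  have hmeas : Measurable (φ t) :=
    measurable_of_tendsto_metrizable hEm (tendsto_pi_nhds.2 hlim)
  refine ⟨hmeas, ?_⟩
  -- open sets, with a loss
  have hopen' : ∀ U : Set (Fin m → ℝ), IsOpen U → ∀ ε : ℝ, 0 < ε →
      ENNReal.ofReal (Real.exp (-(t * (C + ε * K)))) * volume (φ t ⁻¹' U) ≤ volume U := by
    intro U hU ε hε
    obtain ⟨δ, hδ, hdet⟩ := clm_det_lower m ε hε
    set a : ℕ → ENNReal := fun n => ENNReal.ofReal (1 + (-(t * (C + ε * K))) / n) ^ n with ha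
    have hE : Tendsto (fun n : ℕ => (1 + (-(t * (C + ε * K))) / n) ^ n) atTop
        (𝓝 (Real.exp (-(t * (C + ε * K))))) := Real.tendsto_one_add_div_pow_exp _
    have hpos : ∀ᶠ n : ℕ in atTop, 0 ≤ 1 + (-(t * (C + ε * K))) / (n : ℝ) := by
      have h1 : Tendsto (fun n : ℕ => 1 + (-(t * (C + ε * K))) / (n : ℝ)) atTop (𝓝 (1 + 0)) :=
        (tendsto_const_div_atTop_nhds_zero_nat _).const_add 1
      filter_upwards [h1.eventually (lt_mem_nhds (by norm_num : (0 : ℝ) < 1 + 0))] with n hn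
      exact hn.le
    have hlima : Tendsto a atTop (𝓝 (ENNReal.ofReal (Real.exp (-(t * (C + ε * K)))))) := by
      refine ((ENNReal.continuous_ofReal.tendsto _).comp hE).congr' ?_
      filter_upwards [hpos] with n hn
      simp only [Function.comp, ha]
      rw [ENNReal.ofReal_pow hn]
    have hbound : ∀ᶠ n : ℕ in atTop,
        a n * volume ((eulerStep Z (t / n))^[n] ⁻¹' U) ≤ volume U := by
      have hh : Tendsto (fun n : ℕ => t / (n : ℝ) * K) atTop (𝓝 (0 * K)) :=
        (tendsto_const_div_atTop_nhds_zero_nat t).mul_const _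
      rw [zero_mul] at hh
      filter_upwards [hh.eventually (gt_mem_nhds one_pos), hh.eventually (gt_mem_nhds hδ)]
        with n h1 h2
      have h0 : 0 ≤ t / (n : ℝ) := by positivity
      refine eulerStep_iterate_measure hZ hL h0 h1 (fun x => ?_) n hU.measurableSet
      have hK : ‖fderiv ℝ Z x‖ ≤ K := norm_fderiv_le_of_lipschitz ℝ hL
      have hN : ‖(t / (n : ℝ)) • fderiv ℝ Z x‖ ≤ t / n * K := by
        rw [norm_smul, Real.norm_of_nonneg h0]; gcongr
      have hd := hdet _ (hN.trans_lt h2)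
      refine le_trans ?_ hd
      have htr := (abs_le.1 (hdiv x)).1
      rw [ContinuousLinearMap.toLinearMap_smul, map_smul, smul_eq_mul]
      have h3 := mul_le_mul_of_nonneg_left htr h0
      have h4 := mul_le_mul_of_nonneg_left hN hε.le
      have e : -(t * (C + ε * K)) / (n : ℝ) = t / n * (-C) - ε * (t / n * K) := by ring
      rw [e]
      linarith
    calc ENNReal.ofReal (Real.exp (-(t * (C + ε * K)))) * volume (φ t ⁻¹' U)
        = ∫⁻ x, (φ t ⁻¹' U).indicator
            (fun _ => ENNReal.ofReal (Real.exp (-(t * (C + ε * K))))) x := by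
          rw [lintegral_indicator_const (hmeas hU.measurableSet)]
      _ ≤ ∫⁻ x, liminf (fun n : ℕ =>
            ((eulerStep Z (t / n))^[n] ⁻¹' U).indicator (fun _ => a n) x) atTop := by
          gcongr with x
          by_cases hx : x ∈ φ t ⁻¹' U
          · rw [indicator_of_mem hx, ← hlima.liminf_eq]
            refine (liminf_congr ?_).le
            filter_upwards [(hlim x).eventually (hU.mem_nhds hx)] with n hn
            rw [indicator_of_mem (show x ∈ (eulerStep Z (t / n))^[n] ⁻¹' U from hn)]
          · rw [indicator_of_notMem hx]; exact zero_le
      _ ≤ liminf (fun n : ℕ => ∫⁻ x,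
            ((eulerStep Z (t / n))^[n] ⁻¹' U).indicator (fun _ => a n) x) atTop :=
          lintegral_liminf_le fun n =>
            measurable_const.indicator (hEm n hU.measurableSet)
      _ ≤ volume U := by
          refine liminf_le_of_frequently_le' (Eventually.frequently ?_)
          filter_upwards [hbound] with n hn
          rw [lintegral_indicator_const (hEm n hU.measurableSet)]
          exact hn
  have hopen : ∀ U : Set (Fin m → ℝ), IsOpen U →
      volume (φ t ⁻¹' U) ≤ ENNReal.ofReal (Real.exp (C * t)) * volume U := by
    intro U hU
    have h1 : ∀ ε : ℝ, 0 < ε →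
        volume (φ t ⁻¹' U) ≤ ENNReal.ofReal (Real.exp (t * (C + ε * K))) * volume U := by
      intro ε hε
      calc volume (φ t ⁻¹' U) = ENNReal.ofReal (Real.exp (t * (C + ε * K))) *
            (ENNReal.ofReal (Real.exp (-(t * (C + ε * K)))) * volume (φ t ⁻¹' U)) := by
            rw [← mul_assoc, ← ENNReal.ofReal_mul (Real.exp_pos _).le, ← Real.exp_add]
            simp
        _ ≤ _ := by gcongr; exact hopen' U hU ε hε
    have hc : Tendsto (fun ε : ℝ => ENNReal.ofReal (Real.exp (t * (C + ε * K))) * volume U)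
        (𝓝[>] 0) (𝓝 (ENNReal.ofReal (Real.exp (C * t)) * volume U)) := by
      have h2 : Continuous (fun ε : ℝ => ENNReal.ofReal (Real.exp (t * (C + ε * K)))) :=
        ENNReal.continuous_ofReal.comp (by fun_prop)
      have h3 := (h2.tendsto 0).mono_left (nhdsWithin_le_nhds (s := Ioi 0))
      have h4 := ENNReal.Tendsto.mul_const (b := volume U) h3 (Or.inl (by
        simpa using Real.exp_pos _))
      simpa [mul_comm t C] using h4
    refine ge_of_tendsto hc ?_
    filter_upwards [self_mem_nhdsWithin] with ε hε
    exact h1 ε hε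
  refine Measure.le_iff.2 fun B hB => ?_
  rw [Measure.map_apply hmeas hB, Measure.smul_apply, smul_eq_mul]
  rw [B.measure_eq_iInf_isOpen volume]
  rw [ENNReal.mul_iInf_of_ne (by simpa using Real.exp_pos _) ENNReal.ofReal_ne_top]
  refine le_iInf fun U => ?_
  rw [ENNReal.mul_iInf_of_ne (by simpa using Real.exp_pos _) ENNReal.ofReal_ne_top]
  refine le_iInf fun hBU => ?_
  rw [ENNReal.mul_iInf_of_ne (by simpa using Real.exp_pos _) ENNReal.ofReal_ne_top]
  refine le_iInf fun hU => ?_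
  exact (measure_mono (preimage_mono hBU)).trans (hopen U hU)

lemma lintegral_comp_le {m : ℕ} {f : (Fin m → ℝ) → (Fin m → ℝ)} (hf : Measurable f)
    {c : ENNReal} (hle : Measure.map f volume ≤ c • volume) {g : (Fin m → ℝ) → ENNReal}
    (hg : Measurable g) {B : Set (Fin m → ℝ)} (hB : MeasurableSet B) :
    ∫⁻ x in f ⁻¹' B, g (f x) ≤ c * ∫⁻ y in B, g y := by
  rw [← setLIntegral_map hB hg hf]
  calc ∫⁻ y in B, g y ∂(Measure.map f volume) ≤ ∫⁻ y in B, g y ∂(c • volume) :=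
        lintegral_mono' (Measure.restrict_mono le_rfl hle) le_rfl
    _ = _ := by rw [Measure.restrict_smul, lintegral_smul_measure, smul_eq_mul]

end Helpers



/-- Change of variables along the flow: if `Z` is Lipschitz and `C¹` with `|div Z| ≤ C₁`,
then for every measurable set `A`, every `t ≥ 0` and every measurable `u : ℝ^m → ℂ`,
`∫_A |u (φ t x)|² dx ≤ e^{C₁ t} ∫_{φ t '' A} |u y|² dy`. -/
theorem flow_change_of_variables
    (m : ℕ) (hm : 1 ≤ m)
    (Z : (Fin m → ℝ) → (Fin m → ℝ)) (hZ : ContDiff ℝ 1 Z)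
    (φ : ℝ → (Fin m → ℝ) → (Fin m → ℝ))
    (hφ0 : ∀ x, φ 0 x = x)
    (hφ : ∀ (t : ℝ) (x : Fin m → ℝ), HasDerivAt (fun s => φ s x) (Z (φ t x)) t)
    (hlip : ∃ K : NNReal, LipschitzWith K Z)
    (C₁ : ℝ)
    (hdiv : ∀ x, |LinearMap.trace ℝ (Fin m → ℝ) (fderiv ℝ Z x : (Fin m → ℝ) →ₗ[ℝ] (Fin m → ℝ))| ≤ C₁) :
    ∀ (A : Set (Fin m → ℝ)), MeasurableSet A → ∀ t : ℝ, 0 ≤ t →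
      ∀ (u : (Fin m → ℝ) → ℂ), Measurable u →
        ∫ x in A, ‖u (φ t x)‖ ^ 2 ≤
          Real.exp (C₁ * t) * ∫ y in φ t '' A, ‖u y‖ ^ 2 := by
  intro A hA t ht u hu
  obtain ⟨K, hL⟩ := hlip
  obtain ⟨hm1, hle1⟩ := flow_key hZ hL hφ0 hφ hdiv ht
  have hL' : LipschitzWith K (fun x => -Z x) := hL.neg
  have hφ' : ∀ (t : ℝ) (x : Fin m → ℝ),
      HasDerivAt (fun s => φ (-s) x) (-Z (φ (-t) x)) t := by
    intro t x
    have := (hφ (-t) x).scomp t (hasDerivAt_neg t)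
    rw [neg_one_smul] at this
    exact this
  obtain ⟨hm2, hle2⟩ := flow_key (Z := fun x => -Z x) (φ := fun s => φ (-s)) hZ.neg hL'
    (by simpa using hφ0) hφ' (C := C₁) (fun x => by
      rw [fderiv_fun_neg, ContinuousLinearMap.toLinearMap_neg, map_neg, abs_neg]
      exact hdiv x) ht
  have hgrp : ∀ a b x, φ a (φ b x) = φ (a + b) x := by
    intro a b x
    have := ODE_solution_unique_univ (v := fun _ => Z) (s := fun _ => Set.univ) (K := K)
      (f := fun s => φ s (φ b x)) (g := fun s => φ (s + b) x) (t₀ := 0)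
      (fun _ => hL.lipschitzOnWith) (fun s => ⟨hφ s _, trivial⟩)
      (fun s => ⟨(hφ (s + b) x).comp_add_const s b, trivial⟩) (by simp [hφ0])
    exact congrFun this a
  have hi1 : ∀ x, φ (-t) (φ t x) = x := fun x => by simp [hgrp, hφ0]
  have hi2 : ∀ x, φ t (φ (-t) x) = x := fun x => by simp [hgrp, hφ0]
  have him : φ t '' A = φ (-t) ⁻¹' A := Set.image_eq_preimage_of_inverse hi1 hi2 ▸ rfl
  have hB : MeasurableSet (φ t '' A) := by rw [him]; exact hm2 hA
  have hpre : φ t ⁻¹' (φ t '' A) = A :=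
    Set.preimage_image_eq A (Function.LeftInverse.injective hi1)
  have hgm : Measurable (fun y => ENNReal.ofReal (‖u y‖ ^ 2)) := by fun_prop
  have i1 := lintegral_comp_le hm1 hle1 hgm hB
  rw [hpre] at i1
  have i2 := lintegral_comp_le hm2 hle2 (hgm.comp hm1) hA
  simp only [Function.comp, hi2] at i2
  rw [← him] at i2
  rw [integral_eq_lintegral_of_nonneg_ae (f := fun x => ‖u (φ t x)‖ ^ 2) (Filter.Eventually.of_forall fun x => by positivity)
      (((hu.comp hm1).norm.pow_const 2).aestronglyMeasurable),
    integral_eq_lintegral_of_nonneg_ae (Filter.Eventually.of_forall fun x => by positivity)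
      ((hu.norm.pow_const 2).aestronglyMeasurable)]
  by_cases htop : ∫⁻ y in φ t '' A, ENNReal.ofReal (‖u y‖ ^ 2) = ⊤
  · have : ∫⁻ x in A, ENNReal.ofReal (‖u (φ t x)‖ ^ 2) = ⊤ := by
      by_contra hne
      rw [htop] at i2
      exact absurd i2 (not_le.2 (ENNReal.mul_lt_top ENNReal.ofReal_lt_top (lt_top_iff_ne_top.2 hne)))
    rw [this, htop]; simp
  · have := ENNReal.toReal_mono (ENNReal.mul_ne_top ENNReal.ofReal_ne_top htop) i1
    rwa [ENNReal.toReal_mul, ENNReal.toReal_ofReal (Real.exp_pos _).le] at this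
end
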